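/- (Stationary energy of an equilibrium configuration in dimension n ≥ 3.) Let n ≥ 3, γ > 1, G > 0. Let D ⊂ ℝⁿ be a bounded open set with C¹ boundary, let ρ : ℝⁿ → ℝ be continuous, nonnegative, bounded, and supported in the closure of D, define the potential Φ(x) = −G·∫_{ℝⁿ} ρ(y)/‖x−y‖^{n−2} dy, and let p : closure(D) → ℝ be continuously differentiable with p = 0 on ∂D and ∇p(x) = −ρ(x)·∇Φ(x) for all x ∈ D. Then the stationary total energy E := ∫_D p(x)/(γ−1) dx + (1/2)·∫_D ρ(x)·Φ(x) dx satisfies E = ((2(n−1) − n·γ)/((n−2)·(γ−1)))·∫_D p(x) dx. In particular, for n = 3 this gives E = (3·(4/3 − γ)/(γ−1))·∫_D p dx, which vanishes when γ = 4/3. -/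

import Mathlib

open Set MeasureTheory
open scoped InnerProductSpace

/-- `D` has `C¹` boundary: it is the sublevel set of a `C¹` defining function whose
differential does not vanish on the boundary. -/
def HasC1Boundary {n : ℕ} (D : Set (EuclideanSpace ℝ (Fin n))) : Prop :=
  ∃ f : EuclideanSpace ℝ (Fin n) → ℝ,
    ContDiff ℝ 1 f ∧ D = f ⁻¹' Iio 0 ∧ ∀ x ∈ frontier D, fderiv ℝ f x ≠ 0

/-!
Write `Φ = -G V` with `V` the Riesz potential of `ρ` of order `s`. The virial `∫ ρ(x) DΦ(x) x` is
computed in two ways. By homogeneity of the kernel, the interaction energy `F t = ∫ ρ(x) V(t x)`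
with a dilated copy satisfies `F t = t ^ (-s) * F t⁻¹`; differentiating at `t = 1` gives
`2 ∫ ρ(x) DV(x) x = -s ∫ ρ V`. Since `ρ` vanishes off `D`, the pressure extended by zero is
differentiable everywhere with derivative `-ρ DΦ`, so no boundary term survives in the integration
by parts that turns the virial into `n ∫_D p`, where `n` is the dimension.
-/

section Kernel

variable {s : ℝ}

lemma abs_rpow_neg_sub_rpow_neg_le {a b : ℝ} (hs : 0 ≤ s) (ha : 0 < a) (hb : 0 < b) :
    |a ^ (-s) - b ^ (-s)| ≤ s * |a - b| * (a ^ (-(s + 1)) + b ^ (-(s + 1))) := by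
  set c := min a b
  have hc : 0 < c := lt_min ha hb
  have hderiv : ∀ x ∈ Ici c, HasDerivWithinAt (· ^ (-s)) (-s * x ^ (-s - 1)) (Ici c) x :=
    fun x hx ↦ (Real.hasDerivAt_rpow_const (.inl (hc.trans_le hx).ne')).hasDerivWithinAt
  have hbound : ∀ x ∈ Ici c, ‖-s * x ^ (-s - 1)‖ ≤ s * c ^ (-(s + 1)) := fun x hx ↦ by
    rw [norm_mul, norm_neg, Real.norm_of_nonneg hs,
      Real.norm_of_nonneg (Real.rpow_nonneg (hc.trans_le hx).le _), ← neg_add']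
    exact mul_le_mul_of_nonneg_left (Real.rpow_le_rpow_of_nonpos hc hx (by linarith)) hs
  have hc_le : c ^ (-(s + 1)) ≤ a ^ (-(s + 1)) + b ^ (-(s + 1)) := by
    rcases min_choice a b with h | h <;> simp only [c, h, le_add_iff_nonneg_left,
      le_add_iff_nonneg_right] <;> positivity
  calc |a ^ (-s) - b ^ (-s)| ≤ s * c ^ (-(s + 1)) * |a - b| :=
        (convex_Ici c).norm_image_sub_le_of_norm_hasDerivWithin_le hderiv hbound
          (min_le_right a b) (min_le_left a b)
    _ = s * |a - b| * c ^ (-(s + 1)) := by ring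
    _ ≤ s * |a - b| * (a ^ (-(s + 1)) + b ^ (-(s + 1))) := by gcongr

lemma integrableOn_ball_norm_rpow_neg {E : Type*} [NormedAddCommGroup E] [NormedSpace ℝ E]
    [FiniteDimensional ℝ E] [Nontrivial E] [MeasurableSpace E] [BorelSpace E] (μ : Measure E)
    [μ.IsAddHaarMeasure] (hs : s < Module.finrank ℝ E) :
    IntegrableOn (fun z : E ↦ ‖z‖ ^ (-s)) (Metric.ball 0 1) μ := by
  rw [integrableOn_fun_norm_addHaar μ (f := fun r ↦ r ^ (-s))]
  have hdim : 0 < Module.finrank ℝ E := Module.finrank_pos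
  have hint : IntegrableOn (fun r : ℝ ↦ r ^ ((Module.finrank ℝ E : ℝ) - 1 - s)) (Ioo 0 1) :=
    (intervalIntegral.integrableOn_Ioo_rpow_iff one_pos).2 (by linarith)
  refine hint.congr_fun (fun r hr ↦ ?_) measurableSet_Ioo
  dsimp only
  rw [sub_eq_add_neg _ s, Real.rpow_add hr.1, smul_eq_mul, ← Real.rpow_natCast,
    Nat.cast_sub hdim, Nat.cast_one]

end Kernel

section Riesz

variable {E : Type*} [NormedAddCommGroup E]

lemma abs_mul_norm_rpow_neg_le {s r C : ℝ} (hs : 0 ≤ s) (hr : |r| ≤ C) (z : E) :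
    |r| * ‖z‖ ^ (-s) ≤ C * (Metric.ball 0 1).indicator (fun z : E ↦ ‖z‖ ^ (-s)) z + |r| := by
  by_cases hz : z ∈ Metric.ball 0 1
  · rw [indicator_of_mem hz]
    exact le_add_of_le_of_nonneg (by gcongr) (abs_nonneg r)
  · rw [indicator_of_notMem hz, mul_zero, zero_add]
    have hz' : 1 ≤ ‖z‖ := by simpa using hz
    exact mul_le_of_le_one_right (abs_nonneg r)
      (Real.rpow_le_one_of_one_le_of_nonpos hz' (neg_nonpos.2 hs))

lemma abs_norm_sub_rpow_neg_sub_le {s : ℝ} (hs : 0 ≤ s) {x x' y : E} (hx : x ≠ y) (hx' : x' ≠ y) :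
    |‖x - y‖ ^ (-s) - ‖x' - y‖ ^ (-s)| ≤
      s * dist x x' * (‖x - y‖ ^ (-(s + 1)) + ‖x' - y‖ ^ (-(s + 1))) := by
  have hdist : |‖x - y‖ - ‖x' - y‖| ≤ dist x x' := by
    simpa only [sub_sub_sub_cancel_right, dist_eq_norm] using
      abs_norm_sub_norm_le (x - y) (x' - y)
  exact (abs_rpow_neg_sub_rpow_neg_le hs (norm_sub_pos_iff.2 hx) (norm_sub_pos_iff.2 hx')).trans
    (by gcongr)

variable [MeasurableSpace E]

/-- The Riesz potential of the density `ρ` with kernel `‖x‖ ^ (-s)`, without normalising constant;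
in dimension `n ≥ 3` the order `s = n - 2` is the Newtonian potential. -/
noncomputable def rieszPotential (μ : Measure E) (s : ℝ) (ρ : E → ℝ) (x : E) : ℝ :=
  ∫ y, ρ y * ‖x - y‖ ^ (-s) ∂μ

lemma integral_div_norm_pow_eq_rieszPotential (μ : Measure E) (ρ : E → ℝ) (m : ℕ) (x : E) :
    ∫ y, ρ y / ‖x - y‖ ^ m ∂μ = rieszPotential μ m ρ x := by
  simp only [rieszPotential, Real.rpow_neg (norm_nonneg _), Real.rpow_natCast, div_eq_mul_inv]

variable [NormedSpace ℝ E] [FiniteDimensional ℝ E] [BorelSpace E] {μ : Measure E}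
  [μ.IsAddHaarMeasure] {s C : ℝ} {ρ : E → ℝ}

lemma integrable_indicator_ball_norm_sub_rpow_neg [Nontrivial E] (hs : s < Module.finrank ℝ E)
    (x : E) :
    Integrable (fun y ↦ (Metric.ball 0 1).indicator (fun z : E ↦ ‖z‖ ^ (-s)) (x - y)) μ :=
  ((integrable_indicator_iff measurableSet_ball).2
    (integrableOn_ball_norm_rpow_neg μ hs)).comp_sub_left x

lemma integrable_mul_norm_sub_rpow_neg (hs₀ : 0 ≤ s) (hs : s < Module.finrank ℝ E)
    (hρ : Integrable ρ μ) (hC : ∀ x, |ρ x| ≤ C) (x : E) :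
    Integrable (fun y ↦ ρ y * ‖x - y‖ ^ (-s)) μ := by
  have : Nontrivial E := Module.nontrivial_of_finrank_pos (R := ℝ) (mod_cast hs₀.trans_lt hs)
  have hkernel : Measurable fun y ↦ ‖x - y‖ ^ (-s) := by fun_prop
  refine (((integrable_indicator_ball_norm_sub_rpow_neg hs x).const_mul C).add hρ.abs).mono'
    (hρ.aestronglyMeasurable.mul hkernel.aestronglyMeasurable) (.of_forall fun y ↦ ?_)
  rw [norm_mul, Real.norm_eq_abs, Real.norm_of_nonneg (by positivity)]
  exact abs_mul_norm_rpow_neg_le hs₀ (hC y) (x - y)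

lemma rieszPotential_abs_le (hs₀ : 0 ≤ s) (hs : s < Module.finrank ℝ E)
    (hρ : Integrable ρ μ) (hC : ∀ x, |ρ x| ≤ C) (x : E) :
    rieszPotential μ s (|ρ ·|) x ≤
      C * ∫ z in Metric.ball 0 1, ‖z‖ ^ (-s) ∂μ + ∫ y, |ρ y| ∂μ := by
  have : Nontrivial E := Module.nontrivial_of_finrank_pos (R := ℝ) (mod_cast hs₀.trans_lt hs)
  have hsing :=
    (integrable_indicator_ball_norm_sub_rpow_neg hs x (μ := μ)).const_mul C
  calc rieszPotential μ s (|ρ ·|) x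
      ≤ ∫ y, C * (Metric.ball 0 1).indicator (fun z : E ↦ ‖z‖ ^ (-s)) (x - y) + |ρ y| ∂μ :=
        integral_mono
          (integrable_mul_norm_sub_rpow_neg hs₀ hs hρ.abs (by simpa only [abs_abs] using hC) x)
          (hsing.add hρ.abs) fun y ↦ abs_mul_norm_rpow_neg_le hs₀ (hC y) (x - y)
    _ = C * ∫ z in Metric.ball 0 1, ‖z‖ ^ (-s) ∂μ + ∫ y, |ρ y| ∂μ := by
        rw [integral_add hsing hρ.abs, integral_const_mul,
          integral_sub_left_eq_self _ μ x, integral_indicator measurableSet_ball]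

lemma exists_lipschitzWith_rieszPotential (hs₀ : 0 ≤ s) (hs : s + 1 < Module.finrank ℝ E)
    (hρ : Integrable ρ μ) (hC : ∀ x, |ρ x| ≤ C) :
    ∃ K, LipschitzWith K (rieszPotential μ s ρ) := by
  have : Nontrivial E :=
    Module.nontrivial_of_finrank_pos (R := ℝ) (mod_cast (by linarith : (0 : ℝ) < s + 1).trans hs)
  set M := C * ∫ z in Metric.ball 0 1, ‖z‖ ^ (-(s + 1)) ∂μ + ∫ y, |ρ y| ∂μ
  have hs₁ : 0 ≤ s + 1 := by linarith
  have hint := integrable_mul_norm_sub_rpow_neg hs₀ (by linarith) hρ hC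
  have hint_abs := integrable_mul_norm_sub_rpow_neg hs₁ hs hρ.abs
    (by simpa only [abs_abs] using hC)
  refine ⟨(s * (M + M)).toNNReal, LipschitzWith.of_dist_le' fun x x' ↦ ?_⟩
  have hdiff : ∀ᵐ y ∂μ, ‖ρ y * ‖x - y‖ ^ (-s) - ρ y * ‖x' - y‖ ^ (-s)‖ ≤
      s * dist x x' * (|ρ y| * ‖x - y‖ ^ (-(s + 1)) + |ρ y| * ‖x' - y‖ ^ (-(s + 1))) := by
    filter_upwards [Measure.ae_ne μ x, Measure.ae_ne μ x'] with y hy hy'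
    rw [← mul_sub, norm_mul, Real.norm_eq_abs, Real.norm_eq_abs]
    exact (mul_le_mul_of_nonneg_left (abs_norm_sub_rpow_neg_sub_le hs₀ hy.symm hy'.symm)
      (abs_nonneg (ρ y))).trans_eq (by ring)
  calc dist (rieszPotential μ s ρ x) (rieszPotential μ s ρ x')
      = ‖∫ y, (ρ y * ‖x - y‖ ^ (-s) - ρ y * ‖x' - y‖ ^ (-s)) ∂μ‖ := by
        rw [integral_sub (hint x) (hint x'), dist_eq_norm]; rfl
    _ ≤ ∫ y, s * dist x x' * (|ρ y| * ‖x - y‖ ^ (-(s + 1)) + |ρ y| * ‖x' - y‖ ^ (-(s + 1))) ∂μ :=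
        norm_integral_le_of_norm_le (((hint_abs x).add (hint_abs x')).const_mul _) hdiff
    _ = s * dist x x' *
          (rieszPotential μ (s + 1) (|ρ ·|) x + rieszPotential μ (s + 1) (|ρ ·|) x') := by
        rw [integral_const_mul, integral_add (hint_abs x) (hint_abs x')]; rfl
    _ ≤ s * dist x x' * (M + M) := by
        gcongr <;> exact rieszPotential_abs_le hs₁ hs hρ hC _
    _ = s * (M + M) * dist x x' := by ring

lemma integrable_prod_mul_norm_smul_sub_rpow_neg (hs₀ : 0 ≤ s) (hs : s < Module.finrank ℝ E)
    (hρ : Integrable ρ μ) (hC : ∀ x, |ρ x| ≤ C) (t : ℝ) :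
    Integrable (fun z : E × E ↦ ρ z.1 * (ρ z.2 * ‖t • z.1 - z.2‖ ^ (-s))) (μ.prod μ) := by
  have hmeas : AEStronglyMeasurable (fun z : E × E ↦ ρ z.1 * (ρ z.2 * ‖t • z.1 - z.2‖ ^ (-s)))
      (μ.prod μ) :=
    hρ.aestronglyMeasurable.comp_fst.mul (hρ.aestronglyMeasurable.comp_snd.mul
      (by fun_prop : Measurable fun z : E × E ↦ ‖t • z.1 - z.2‖ ^ (-s)).aestronglyMeasurable)
  refine (integrable_prod_iff hmeas).2 ⟨.of_forall fun x ↦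
    (integrable_mul_norm_sub_rpow_neg hs₀ hs hρ hC (t • x)).const_mul (ρ x), ?_⟩
  refine (hρ.abs.mul_const (C * ∫ z in Metric.ball 0 1, ‖z‖ ^ (-s) ∂μ + ∫ y, |ρ y| ∂μ)).mono'
    hmeas.norm.integral_prod_right' (.of_forall fun x ↦ ?_)
  calc ‖∫ y, ‖ρ x * (ρ y * ‖t • x - y‖ ^ (-s))‖ ∂μ‖
      = |ρ x| * rieszPotential μ s (|ρ ·|) (t • x) := by
        rw [Real.norm_of_nonneg (by positivity), rieszPotential, ← integral_const_mul]
        refine integral_congr_ae (.of_forall fun y ↦ ?_)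
        dsimp only
        rw [norm_mul, norm_mul, Real.norm_of_nonneg (by positivity : 0 ≤ ‖t • x - y‖ ^ (-s))]
        rfl
    _ ≤ |ρ x| * (C * ∫ z in Metric.ball 0 1, ‖z‖ ^ (-s) ∂μ + ∫ y, |ρ y| ∂μ) := by
        gcongr
        exact rieszPotential_abs_le hs₀ hs hρ hC (t • x)

lemma integral_mul_rieszPotential_smul (hs₀ : 0 ≤ s) (hs : s < Module.finrank ℝ E)
    (hρ : Integrable ρ μ) (hC : ∀ x, |ρ x| ≤ C) {t : ℝ} (ht : 0 < t) :
    ∫ x, ρ x * rieszPotential μ s ρ (t • x) ∂μ =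
      t ^ (-s) * ∫ x, ρ x * rieszPotential μ s ρ (t⁻¹ • x) ∂μ := by
  have hnorm (x y : E) : ‖t • x - y‖ ^ (-s) = t ^ (-s) * ‖t⁻¹ • y - x‖ ^ (-s) := by
    rw [← Real.mul_rpow ht.le (norm_nonneg _), ← norm_smul_of_nonneg ht.le, smul_sub,
      smul_inv_smul₀ ht.ne', norm_sub_rev]
  simp only [rieszPotential, ← integral_const_mul]
  rw [integral_integral_swap (integrable_prod_mul_norm_smul_sub_rpow_neg hs₀ hs hρ hC t)]
  refine integral_congr_ae (.of_forall fun y ↦ integral_congr_ae (.of_forall fun x ↦ ?_))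
  dsimp only
  rw [hnorm]
  ring

end Riesz

section Dilation

variable {E : Type*} [NormedAddCommGroup E] [MeasurableSpace E] [BorelSpace E] {μ : Measure E}
  {w f : E → ℝ} {K : NNReal}

lemma integrable_mul_of_lipschitzWith [SecondCountableTopology E] (hf : LipschitzWith K f)
    (hw : Integrable w μ) (hw' : Integrable (fun x ↦ ‖w x‖ * ‖x‖) μ) :
    Integrable (fun x ↦ w x * f x) μ := by
  refine ((hw.norm.mul_const ‖f 0‖).add (hw'.const_mul K)).mono'
    (hw.aestronglyMeasurable.mul hf.continuous.aestronglyMeasurable) (.of_forall fun x ↦ ?_)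
  have hfx : ‖f x‖ ≤ ‖f 0‖ + K * ‖x‖ := by
    have := hf.norm_sub_le x 0
    rw [sub_zero] at this
    linarith [norm_le_norm_add_norm_sub' (f x) (f 0)]
  calc ‖w x * f x‖ = ‖w x‖ * ‖f x‖ := norm_mul _ _
    _ ≤ ‖w x‖ * (‖f 0‖ + K * ‖x‖) := by gcongr
    _ = ‖w x‖ * ‖f 0‖ + K * (‖w x‖ * ‖x‖) := by ring

variable [NormedSpace ℝ E]

lemma integrable_fderiv_apply_mul [IsFiniteMeasureOnCompacts μ] {c : E → ℝ}
    (hf : LipschitzWith K f) (hsupp : HasCompactSupport f) (hc : Continuous c) (v : E) :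
    Integrable (fun x ↦ fderiv ℝ f x v * c x) μ := by
  have hzero : Function.support (fun x ↦ fderiv ℝ f x v * c x) ⊆ tsupport f := fun x hx ↦ by
    by_contra hxf
    exact hx (by simp [image_eq_zero_of_notMem_tsupport (f := fderiv ℝ f)
      fun h ↦ hxf (tsupport_fderiv_subset ℝ h)])
  have hbound (x : E) : ‖fderiv ℝ f x v‖ ≤ K * ‖v‖ :=
    (fderiv ℝ f x).le_of_opNorm_le (norm_fderiv_le_of_lipschitz ℝ hf) v
  rw [← integrableOn_iff_integrable_of_support_subset hzero]
  exact (hc.continuousOn.integrableOn_compact hsupp).bdd_mul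
    (measurable_fderiv_apply_const ℝ f v).aestronglyMeasurable (.of_forall hbound)

variable [FiniteDimensional ℝ E] [μ.IsAddHaarMeasure]

lemma hasDerivAt_integral_mul_comp_smul (hf : LipschitzWith K f) (hw : Integrable w μ)
    (hw' : Integrable (fun x ↦ ‖w x‖ * ‖x‖) μ) :
    HasDerivAt (fun t : ℝ ↦ ∫ x, w x * f (t • x) ∂μ) (∫ x, w x * fderiv ℝ f x x ∂μ) 1 := by
  have hderiv : ∀ᵐ x ∂μ, HasDerivAt (fun t : ℝ ↦ w x * f (t • x)) (w x * fderiv ℝ f x x) 1 := by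
    filter_upwards [hf.ae_differentiableAt (μ := μ)] with x hx
    have hsmul : HasDerivAt (fun t : ℝ ↦ t • x) x 1 := by
      simpa using (hasDerivAt_id (1 : ℝ)).smul_const x
    exact (hx.hasFDerivAt.comp_hasDerivAt_of_eq 1 hsmul (one_smul ℝ x).symm).const_mul (w x)
  have hlip (x : E) :
      LipschitzWith (Real.nnabs (K * (‖w x‖ * ‖x‖))) fun t : ℝ ↦ w x * f (t • x) := by
    refine LipschitzWith.of_dist_le_mul fun t t' ↦ ?_
    calc dist (w x * f (t • x)) (w x * f (t' • x))
        = ‖w x‖ * dist (f (t • x)) (f (t' • x)) := by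
          rw [dist_eq_norm, dist_eq_norm, ← mul_sub, norm_mul]
      _ ≤ ‖w x‖ * (K * (dist t t' * ‖x‖)) := by
          gcongr
          simpa only [dist_eq_norm, ← sub_smul, norm_smul] using hf.dist_le_mul (t • x) (t' • x)
      _ = Real.nnabs (K * (‖w x‖ * ‖x‖)) * dist t t' := by
          rw [Real.coe_nnabs, abs_of_nonneg (by positivity)]
          ring
  have hint₁ : Integrable (fun x ↦ w x * f ((1 : ℝ) • x)) μ := by
    simpa only [one_smul] using integrable_mul_of_lipschitzWith hf hw hw'
  have hmeas : Measurable fun x ↦ fderiv ℝ f x x :=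
    (continuous_fst.clm_apply continuous_snd).measurable.comp
      ((measurable_fderiv ℝ f).prodMk measurable_id)
  exact (hasDerivAt_integral_of_dominated_loc_of_lip Filter.univ_mem
    (.of_forall fun t ↦ hw.aestronglyMeasurable.mul
      (hf.continuous.comp (continuous_const_smul t)).aestronglyMeasurable)
    hint₁ (hw.aestronglyMeasurable.mul hmeas.aestronglyMeasurable)
    (.of_forall fun x ↦ (hlip x).lipschitzOnWith) (hw'.const_mul K) hderiv).2

lemma integral_fderiv_apply_self (hf : LipschitzWith K f) (hsupp : HasCompactSupport f) :
    ∫ x, fderiv ℝ f x x ∂μ = -Module.finrank ℝ E * ∫ x, f x ∂μ := by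
  let b := Module.finBasis ℝ E
  let coord (i) : E →L[ℝ] ℝ := (b.coord i).toContinuousLinearMap
  have hparts (i) : ∫ x, fderiv ℝ f x (b i) * coord i x ∂μ = -∫ x, f x ∂μ := by
    have hcoord (x : E) : lineDeriv ℝ (coord i) x (-b i) = -1 := by
      rw [(coord i).differentiableAt.lineDeriv_eq_fderiv, (coord i).fderiv]
      simp [coord]
    have hline : ∀ᵐ x ∂μ, lineDeriv ℝ f x (b i) = fderiv ℝ f x (b i) :=
      hf.ae_differentiableAt.mono fun x hx ↦ hx.lineDeriv_eq_fderiv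
    calc ∫ x, fderiv ℝ f x (b i) * coord i x ∂μ
        = ∫ x, lineDeriv ℝ f x (b i) * coord i x ∂μ :=
          integral_congr_ae (hline.mono fun x hx ↦ by dsimp only; rw [hx])
      _ = ∫ x, lineDeriv ℝ (coord i) x (-b i) * f x ∂μ := by
          simpa only [neg_neg] using
            ((coord i).lipschitz.integral_lineDeriv_mul_eq hf hsupp (-b i)).symm
      _ = -∫ x, f x ∂μ := by simp only [hcoord, neg_one_mul, integral_neg]
  have hsum (x : E) : fderiv ℝ f x x = ∑ i, fderiv ℝ f x (b i) * coord i x := by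
    conv_lhs => arg 2; rw [← b.sum_repr x]
    simp only [map_sum, map_smul, smul_eq_mul, mul_comm]
    rfl
  calc ∫ x, fderiv ℝ f x x ∂μ = ∑ i, ∫ x, fderiv ℝ f x (b i) * coord i x ∂μ := by
        simp only [hsum]
        exact integral_finsetSum _ fun i _ ↦
          integrable_fderiv_apply_mul hf hsupp (coord i).continuous (b i)
    _ = -Module.finrank ℝ E * ∫ x, f x ∂μ := by simp [hparts]

end Dilation

section ZeroExtension

open Filter Topology

variable {E F : Type*} [NormedAddCommGroup E] [NormedSpace ℝ E] [NormedAddCommGroup F]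
  [NormedSpace ℝ F] {D : Set E} {f : E → F} {f' : E → E →L[ℝ] F}

lemma norm_le_mul_dist_of_eq_zero_off {C : ℝ} {x y : E} (hD : IsOpen D)
    (hf : ContinuousOn f (segment ℝ y x)) (hf' : ∀ z ∈ D, HasFDerivAt f (f' z) z)
    (hf₀ : ∀ z ∉ D, f z = 0) (hbound : ∀ z ∈ segment ℝ y x, ‖f' z‖ ≤ C) (hx : x ∉ D) :
    ‖f y‖ ≤ C * dist y x := by
  have hline : Continuous (AffineMap.lineMap (k := ℝ) y x) := AffineMap.lineMap_continuous
  -- `t` is the first time at which the segment from `y` to `x` leaves `D`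
  obtain ⟨t, ⟨htI, htD⟩, hleast⟩ :=
    (isCompact_Icc.inter_right (hD.isClosed_compl.preimage hline)).exists_isLeast
      (⟨1, right_mem_Icc.2 zero_le_one, by simpa using hx⟩ :
        (Icc (0 : ℝ) 1 ∩ AffineMap.lineMap y x ⁻¹' Dᶜ).Nonempty)
  have hseg : ∀ r ∈ Icc 0 t, AffineMap.lineMap y x r ∈ segment ℝ y x := fun r hr ↦ by
    rw [segment_eq_image_lineMap]
    exact mem_image_of_mem _ ⟨hr.1, hr.2.trans htI.2⟩
  have hmemD : ∀ r ∈ Ico 0 t, AffineMap.lineMap y x r ∈ D := fun r hr ↦ by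
    by_contra hrD
    exact (hleast ⟨⟨hr.1, hr.2.le.trans htI.2⟩, hrD⟩).not_gt hr.2
  have hmv := norm_image_sub_le_of_norm_deriv_right_le_segment
    (f := fun r ↦ f (AffineMap.lineMap y x r)) (hf.comp hline.continuousOn hseg)
    (fun r hr ↦
      ((hf' _ (hmemD r hr)).comp_hasDerivAt r AffineMap.hasDerivAt_lineMap).hasDerivWithinAt)
    (fun r hr ↦ ((f' _).le_opNorm (x - y)).trans <| mul_le_mul_of_nonneg_right
      (hbound _ (hseg r (Ico_subset_Icc_self hr))) (norm_nonneg _)) t (right_mem_Icc.2 htI.1)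
  have hC : 0 ≤ C := (norm_nonneg _).trans (hbound y (left_mem_segment ℝ y x))
  calc ‖f y‖ ≤ C * ‖x - y‖ * t := by simpa [hf₀ _ htD] using hmv
    _ ≤ C * ‖x - y‖ := mul_le_of_le_one_right (by positivity) htI.2
    _ = C * dist y x := by rw [dist_eq_norm']

lemma hasFDerivAt_of_eq_zero_off (hD : IsOpen D) (hf : Continuous f)
    (hf' : ∀ x ∈ D, HasFDerivAt f (f' x) x) (hf₀ : ∀ x ∉ D, f x = 0) (hf'₀ : ∀ x ∉ D, f' x = 0)
    (hf'_cont : ∀ x ∉ D, ContinuousAt f' x) (x : E) : HasFDerivAt f (f' x) x := by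
  by_cases hx : x ∈ D
  · exact hf' x hx
  have hsmall : ∀ ε > 0, ∀ᶠ y in 𝓝 x, ‖f y‖ ≤ ε * ‖y - x‖ := fun ε hε ↦ by
    have hev : ∀ᶠ z in 𝓝 x, ‖f' z‖ < ε :=
      (hf'_cont x hx).norm.eventually_lt_const (by simpa [hf'₀ x hx])
    obtain ⟨δ, hδ, hball⟩ := Metric.eventually_nhds_iff_ball.1 hev
    filter_upwards [Metric.ball_mem_nhds x hδ] with y hy
    rw [← dist_eq_norm]
    have hseg := (convex_ball x δ).segment_subset hy (Metric.mem_ball_self hδ)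
    exact norm_le_mul_dist_of_eq_zero_off hD hf.continuousOn hf' hf₀
      (fun z hz ↦ (hball z (hseg hz)).le) hx
  rw [hf'₀ x hx, hasFDerivAt_iff_isLittleO, Asymptotics.isLittleO_iff]
  intro ε hε
  simpa [hf₀ x hx] using hsmall ε hε

end ZeroExtension

lemma HasC1Boundary.interior_closure_eq {n : ℕ} {D : Set (EuclideanSpace ℝ (Fin n))}
    (hD : HasC1Boundary D) : interior (closure D) = D := by
  obtain ⟨f, hf, hDf, hf'⟩ := hD
  have hopen : IsOpen D := hDf ▸ isOpen_Iio.preimage hf.continuous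
  have hnonpos : closure D ⊆ f ⁻¹' Iic 0 := by
    rw [hDf]
    exact closure_minimal (preimage_mono Iio_subset_Iic_self)
      (isClosed_Iic.preimage hf.continuous)
  refine subset_antisymm (fun x hx ↦ ?_) (interior_maximal subset_closure hopen)
  by_contra hxD
  have hfx : 0 ≤ f x := by simpa [hDf] using hxD
  have hmax : IsLocalMax f x := by
    filter_upwards [mem_interior_iff_mem_nhds.1 hx] with y hy using (hnonpos hy).trans hfx
  exact hf' x (hopen.frontier_eq ▸ ⟨interior_subset hx, hxD⟩) hmax.fderiv_eq_zero

lemma hasFDerivAt_of_gradient_eq_smul {E : Type*} [NormedAddCommGroup E] [InnerProductSpace ℝ E]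
    [CompleteSpace E] {f g : E → ℝ} {c : ℝ} {x : E} (hf : DifferentiableAt ℝ f x)
    (h : gradient f x = c • gradient g x) : HasFDerivAt f (c • fderiv ℝ g x) x := by
  have hfderiv : fderiv ℝ f x = c • fderiv ℝ g x := by
    simpa [gradient] using congrArg (InnerProductSpace.toDual ℝ E) h
  exact hfderiv ▸ hf.hasFDerivAt

section Virial

variable {E : Type*} [NormedAddCommGroup E] [NormedSpace ℝ E] [FiniteDimensional ℝ E]
  [MeasurableSpace E] [BorelSpace E] {μ : Measure E} [μ.IsAddHaarMeasure] {D : Set E}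

lemma two_mul_integral_mul_fderiv_rieszPotential {s C : ℝ} {ρ : E → ℝ} (hs₀ : 0 ≤ s)
    (hs : s + 1 < Module.finrank ℝ E) (hρ : Integrable ρ μ) (hC : ∀ x, |ρ x| ≤ C)
    (hρ' : Integrable (fun x ↦ ‖ρ x‖ * ‖x‖) μ) :
    2 * ∫ x, ρ x * fderiv ℝ (rieszPotential μ s ρ) x x ∂μ =
      -s * ∫ x, ρ x * rieszPotential μ s ρ x ∂μ := by
  obtain ⟨K, hK⟩ := exists_lipschitzWith_rieszPotential hs₀ hs hρ hC
  set F := fun t : ℝ ↦ ∫ x, ρ x * rieszPotential μ s ρ (t • x) ∂μ with hF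
  have hderiv : HasDerivAt F (∫ x, ρ x * fderiv ℝ (rieszPotential μ s ρ) x x ∂μ) 1 :=
    hasDerivAt_integral_mul_comp_smul hK hρ hρ'
  have hF₁ : F 1 = ∫ x, ρ x * rieszPotential μ s ρ x ∂μ := by simp only [hF, one_smul]
  have hscale : F =ᶠ[nhds 1] fun t ↦ t ^ (-s) * F t⁻¹ :=
    (eventually_gt_nhds one_pos).mono fun t ht ↦
      integral_mul_rieszPotential_smul hs₀ (by linarith) hρ hC ht
  have hpow : HasDerivAt (· ^ (-s)) (-s) (1 : ℝ) := by
    simpa using Real.hasDerivAt_rpow_const (p := -s) (.inl one_ne_zero)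
  have hinv : HasDerivAt (fun t ↦ F t⁻¹)
      (-∫ x, ρ x * fderiv ℝ (rieszPotential μ s ρ) x x ∂μ) 1 := by
    simpa [Function.comp_def] using
      hderiv.comp_of_eq 1 (hasDerivAt_inv one_ne_zero) inv_one.symm
  have huniq := hderiv.unique ((hpow.mul hinv).congr_of_eventuallyEq hscale)
  simp only [inv_one, Real.one_rpow, hF₁] at huniq
  linarith

lemma integral_apply_self_of_eq_zero_on_frontier {p : E → ℝ} {p' : E → E →L[ℝ] ℝ} {B : NNReal}
    (hD : IsOpen D) (hD_bdd : Bornology.IsBounded D) (hp : ContinuousOn p (closure D))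
    (hp₀ : ∀ x ∈ frontier D, p x = 0) (hp' : ∀ x ∈ D, HasFDerivAt p (p' x) x)
    (hp'₀ : ∀ x ∉ D, p' x = 0) (hp'_cont : ∀ x ∉ D, ContinuousAt p' x) (hB : ∀ x, ‖p' x‖₊ ≤ B) :
    ∫ x, p' x x ∂μ = -Module.finrank ℝ E * ∫ x in D, p x ∂μ := by
  have hext : ∀ x, HasFDerivAt (D.indicator p) (p' x) x := by
    refine hasFDerivAt_of_eq_zero_off hD (continuous_indicator hp₀ hp) (fun x hx ↦ ?_)
      (fun x hx ↦ indicator_of_notMem hx p) hp'₀ hp'_cont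
    exact (hp' x hx).congr_of_eventuallyEq
      ((eqOn_indicator (f := p)).eventuallyEq_of_mem (hD.mem_nhds hx))
  have hlip : LipschitzWith B (D.indicator p) :=
    lipschitzWith_of_nnnorm_fderiv_le (fun x ↦ (hext x).differentiableAt)
      fun x ↦ (hext x).fderiv ▸ hB x
  have hsupp : HasCompactSupport (D.indicator p) :=
    .intro hD_bdd.isCompact_closure fun x hx ↦
      indicator_of_notMem (fun h ↦ hx (subset_closure h)) p
  rw [← integral_indicator hD.measurableSet, ← integral_fderiv_apply_self hlip hsupp]
  simp only [(hext _).fderiv]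

lemma integral_mul_fderiv_apply_self_of_equilibrium {ρ Φ p : E → ℝ} {K : NNReal} (hD : IsOpen D)
    (hD_bdd : Bornology.IsBounded D) (hρ : Continuous ρ) (hρD : Function.support ρ ⊆ D)
    (hΦ : LipschitzWith K Φ) (hp : ContinuousOn p (closure D)) (hp₀ : ∀ x ∈ frontier D, p x = 0)
    (heq : ∀ x ∈ D, HasFDerivAt p (-ρ x • fderiv ℝ Φ x) x) :
    ∫ x, ρ x * fderiv ℝ Φ x x ∂μ = Module.finrank ℝ E * ∫ x in D, p x ∂μ := by
  have hρ₀ : ∀ x ∉ D, ρ x = 0 := fun x hx ↦ Function.notMem_support.1 fun h ↦ hx (hρD h)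
  obtain ⟨C, hC⟩ := (HasCompactSupport.of_support_subset_isCompact hD_bdd.isCompact_closure
    (hρD.trans subset_closure)).exists_bound_of_continuous hρ
  have hforce (x : E) : ‖-ρ x • fderiv ℝ Φ x‖ ≤ ‖ρ x‖ * K := by
    rw [norm_smul, norm_neg]
    gcongr
    exact norm_fderiv_le_of_lipschitz ℝ hΦ
  have hcont : ∀ x ∉ D, ContinuousAt (fun x ↦ -ρ x • fderiv ℝ Φ x) x := fun x hx ↦ by
    have hlim : ContinuousAt (fun x ↦ ‖ρ x‖ * K) x := by fun_prop
    rw [ContinuousAt, hρ₀ x hx, norm_zero, zero_mul] at hlim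
    rw [ContinuousAt, hρ₀ x hx, neg_zero, zero_smul]
    exact squeeze_zero_norm hforce hlim
  have hparts := integral_apply_self_of_eq_zero_on_frontier (μ := μ) (B := C.toNNReal * K) hD hD_bdd
    hp hp₀ heq (fun x hx ↦ by rw [hρ₀ x hx, neg_zero, zero_smul]) hcont fun x ↦ by
      rw [← NNReal.coe_le_coe, coe_nnnorm, NNReal.coe_mul]
      exact (hforce x).trans (by gcongr; exact (hC x).trans C.le_coe_toNNReal)
  simp only [smul_apply, smul_eq_mul, neg_mul, integral_neg] at hparts
  exact neg_inj.1 hparts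

theorem stmt14_general {s γ G : ℝ} (hs₀ : 0 < s) (hs : s + 1 < Module.finrank ℝ E) (hγ : γ ≠ 1)
    (hD : IsOpen D) (hD_bdd : Bornology.IsBounded D) {ρ Φ p : E → ℝ} (hρ : Continuous ρ)
    (hρD : Function.support ρ ⊆ D) (hΦ : ∀ x, Φ x = -G * rieszPotential μ s ρ x)
    (hp : ContinuousOn p (closure D)) (hp₀ : ∀ x ∈ frontier D, p x = 0)
    (heq : ∀ x ∈ D, HasFDerivAt p (-ρ x • fderiv ℝ Φ x) x) :
    (∫ x in D, p x / (γ - 1) ∂μ) + (1 / 2) * ∫ x in D, ρ x * Φ x ∂μ =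
      ((s + Module.finrank ℝ E - Module.finrank ℝ E * γ) / (s * (γ - 1))) * ∫ x in D, p x ∂μ := by
  have hsupp : HasCompactSupport ρ := .of_support_subset_isCompact hD_bdd.isCompact_closure
    (hρD.trans subset_closure)
  obtain ⟨C, hC⟩ := hsupp.exists_bound_of_continuous hρ
  have hρ_int := hρ.integrable_of_hasCompactSupport hsupp (μ := μ)
  have hρ_moment : Integrable (fun x ↦ ‖ρ x‖ * ‖x‖) μ :=
    (hρ.norm.mul continuous_norm).integrable_of_hasCompactSupport hsupp.norm.mul_right
  obtain ⟨K, hK⟩ := exists_lipschitzWith_rieszPotential hs₀.le hs hρ_int hC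
  obtain rfl : Φ = -G • rieszPotential μ s ρ := funext hΦ
  have hgravity := two_mul_integral_mul_fderiv_rieszPotential hs₀.le hs hρ_int hC hρ_moment
  have hΦ_lip : LipschitzWith (‖-G‖₊ * K) (-G • rieszPotential μ s ρ) :=
    (lipschitzWith_smul (-G)).comp hK
  have hpressure := integral_mul_fderiv_apply_self_of_equilibrium (μ := μ) hD hD_bdd hρ hρD
    hΦ_lip hp hp₀ heq
  have hoff : ∀ x ∉ D, ρ x * (-G • rieszPotential μ s ρ) x = 0 := fun x hx ↦ by
    rw [Function.notMem_support.1 fun h ↦ hx (hρD h), zero_mul]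
  have hvirial : 2 * (Module.finrank ℝ E * ∫ x in D, p x ∂μ) =
      -s * ∫ x, ρ x * (-G • rieszPotential μ s ρ) x ∂μ := by
    simp only [← hpressure, fderiv_const_smul_field, Pi.smul_apply, smul_apply, smul_eq_mul,
      mul_left_comm _ (-G), integral_const_mul]
    linear_combination -G * hgravity
  rw [integral_div, setIntegral_eq_integral_of_forall_compl_eq_zero hoff]
  have hγ' : γ - 1 ≠ 0 := sub_ne_zero.2 hγ
  field_simp
  linear_combination (γ - 1) * hvirial

end Virial

/-- Stationary energy of a self-gravitating polytropic gas in equilibrium in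
dimension `n ≥ 3`:
`∫_D p/(γ−1) + (1/2)∫_D ρΦ = ((2(n−1) − nγ)/((n−2)(γ−1)))·∫_D p`,
where `Φ(x) = −G∫ρ(y)/‖x−y‖^{n−2} dy` and `∇p = −ρ∇Φ` on `D`. -/
theorem stmt14 (n : ℕ) (hn : 3 ≤ n) (γ G : ℝ) (hγ : 1 < γ) (hG : 0 < G)
    (D : Set (EuclideanSpace ℝ (Fin n))) (hD_open : IsOpen D)
    (hD_bdd : Bornology.IsBounded D) (hD_bdry : HasC1Boundary D)
    (ρ : EuclideanSpace ℝ (Fin n) → ℝ) (hρ_cont : Continuous ρ)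
    (hρ_nonneg : ∀ x, 0 ≤ ρ x) (hρ_bdd : ∃ C, ∀ x, ρ x ≤ C)
    (hρ_supp : Function.support ρ ⊆ closure D)
    (Φ : EuclideanSpace ℝ (Fin n) → ℝ)
    (hΦ : ∀ x, Φ x = -G * ∫ y, ρ y / ‖x - y‖ ^ (n - 2))
    (p : EuclideanSpace ℝ (Fin n) → ℝ)
    (hp : ContDiffOn ℝ 1 p (closure D))
    (hp0 : ∀ x ∈ frontier D, p x = 0)
    (heq : ∀ x ∈ D, gradient p x = -ρ x • gradient Φ x) :
    (∫ x in D, p x / (γ - 1)) + (1 / 2) * ∫ x in D, ρ x * Φ x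
      = ((2 * ((n : ℝ) - 1) - (n : ℝ) * γ) / (((n : ℝ) - 2) * (γ - 1)))
          * ∫ x in D, p x := by
  have hn' : (3 : ℝ) ≤ n := mod_cast hn
  have hcast : ((n - 2 : ℕ) : ℝ) = n - 2 := Nat.cast_sub (by omega)
  have hforce : ∀ x ∈ D, HasFDerivAt p (-ρ x • fderiv ℝ Φ x) x := fun x hx ↦
    hasFDerivAt_of_gradient_eq_smul ((hp.differentiableOn one_ne_zero).differentiableAt
      (Filter.mem_of_superset (hD_open.mem_nhds hx) subset_closure)) (heq x hx)
  have henergy := stmt14_general (s := (n - 2 : ℕ)) (by linarith)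
    (by rw [finrank_euclideanSpace_fin]; linarith) hγ.ne' hD_open hD_bdd hρ_cont
    (hD_bdry.interior_closure_eq ▸ interior_maximal hρ_supp hρ_cont.isOpen_support)
    (fun x ↦ by rw [hΦ, integral_div_norm_pow_eq_rieszPotential]) hp.continuousOn hp0 hforce
  rw [henergy, finrank_euclideanSpace_fin, hcast]
  ring
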